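/- arXiv:2111.13958 — 4 statements merged into one kernel-verified Lean document; each statement's English description precedes it below -/
import Mathlib

section
/- The negative reduced entropy is 1-strongly convex on the open reduced simplex: for an integer k ≥ 1, the function g : Δ_k → ℝ defined by g(u) = Σ_{j=1}^k u_j log(u_j) + (1 − Σ_{j=1}^k u_j) log(1 − Σ_{j=1}^k u_j) satisfies, for all u, v ∈ Δ_k and all t ∈ [0,1], g(t·u + (1−t)·v) ≤ t·g(u) + (1−t)·g(v) − (t(1−t)/2)·‖u − v‖_2². -/
open scoped BigOperators
open Finset

noncomputable section

/-- Open reduced simplex `Δ_q = {u : 0 < u_j < 1 ∀ j, Σ_j u_j < 1}`. -/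
def redSimplex (q : ℕ) : Set (EuclideanSpace ℝ (Fin q)) :=
  {u | (∀ j, 0 < u j ∧ u j < 1) ∧ ∑ j, u j < 1}

/-- Negative reduced entropy `g(u) = Σ_j u_j log u_j + (1 - Σ_j u_j) log (1 - Σ_j u_j)`. -/
def negRedEntropy {q : ℕ} (u : EuclideanSpace ℝ (Fin q)) : ℝ :=
  ∑ j, u j * Real.log (u j) + (1 - ∑ j, u j) * Real.log (1 - ∑ j, u j)

lemma aux_convex : ConvexOn ℝ (Set.Ioo (0:ℝ) 1) (fun x => x * Real.log x - x ^ 2 / 2) := by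
  have hd : ∀ x ∈ Set.Ioo (0:ℝ) 1,
      HasDerivAt (fun x => x * Real.log x - x ^ 2 / 2) (Real.log x + 1 - x) x := by
    intro x hx
    have h1 := Real.hasDerivAt_mul_log hx.1.ne'
    have h2 : HasDerivAt (fun x : ℝ => x ^ 2 / 2) x x := by
      have h3 := (hasDerivAt_pow 2 x).div_const 2
      have h4 : ((2 : ℕ) : ℝ) * x ^ (2 - 1) / 2 = x := by norm_num
      rw [h4] at h3
      exact h3
    exact h1.sub h2
  apply MonotoneOn.convexOn_of_deriv (convex_Ioo 0 1)
  · exact fun x hx => (hd x hx).continuousAt.continuousWithinAt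
  · rw [interior_Ioo]
    exact fun x hx => (hd x hx).differentiableAt.differentiableWithinAt
  · rw [interior_Ioo]
    intro x hx y hy hxy
    rw [(hd x hx).deriv, (hd y hy).deriv]
    have h := Real.log_le_sub_one_of_pos (div_pos hx.1 hy.1)
    rw [Real.log_div hx.1.ne' hy.1.ne'] at h
    have h3 : x / y - 1 ≤ x - y := by
      rw [div_sub_one hy.1.ne', div_le_iff₀ hy.1]
      nlinarith [hy.2]
    linarith

lemma aux_coord (x y t : ℝ) (hx : 0 < x ∧ x < 1) (hy : 0 < y ∧ y < 1)
    (ht : t ∈ Set.Icc (0:ℝ) 1) :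
    (t * x + (1 - t) * y) * Real.log (t * x + (1 - t) * y) ≤
      t * (x * Real.log x) + (1 - t) * (y * Real.log y) - t * (1 - t) / 2 * (x - y) ^ 2 := by
  have h := aux_convex.2 hx hy ht.1 (sub_nonneg.2 ht.2) (by ring)
  simp only [smul_eq_mul] at h
  nlinarith

/-- **The negative reduced entropy is 1-strongly convex on the open reduced simplex**:
for `u, v ∈ Δ_k` and `t ∈ [0,1]`,
`g(t u + (1-t) v) ≤ t g(u) + (1-t) g(v) - (t(1-t)/2) ‖u - v‖₂²`. -/
theorem negRedEntropy_strongly_convex (k : ℕ) (hk : 1 ≤ k) :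
    ∀ u ∈ redSimplex k, ∀ v ∈ redSimplex k, ∀ t ∈ Set.Icc (0 : ℝ) 1,
      negRedEntropy (t • u + (1 - t) • v)
        ≤ t * negRedEntropy u + (1 - t) * negRedEntropy v
          - (t * (1 - t) / 2) * ‖u - v‖ ^ 2 := by
  intro u hu v hv t ht
  have hs := Finset.sum_le_sum (fun j (_ : j ∈ Finset.univ) =>
    aux_coord (u j) (v j) t (hu.1 j) (hv.1 j) ht)
  have hl := Real.convexOn_mul_log.2 (x := 1 - ∑ j, u j) (y := 1 - ∑ j, v j)
    (sub_nonneg.2 hu.2.le) (sub_nonneg.2 hv.2.le) ht.1 (sub_nonneg.2 ht.2) (by ring)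
  simp only [smul_eq_mul] at hl
  have he : t * (1 - ∑ j, u j) + (1 - t) * (1 - ∑ j, v j)
      = 1 - ∑ j, (t * u j + (1 - t) * v j) := by
    rw [Finset.sum_add_distrib, ← Finset.mul_sum, ← Finset.mul_sum]; ring
  rw [he] at hl
  rw [Finset.sum_sub_distrib, Finset.sum_add_distrib, ← Finset.mul_sum, ← Finset.mul_sum,
    ← Finset.mul_sum] at hs
  have hn : ‖u - v‖ ^ 2 = ∑ j, (u j - v j) ^ 2 := by
    rw [EuclideanSpace.real_norm_sq_eq]; simp
  rw [hn]
  simp only [negRedEntropy, PiLp.add_apply, PiLp.smul_apply, smul_eq_mul]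
  linarith
end
end

section
/- (Theorem 4, case iv) Inactive half-space: let m ≥ 1, a_0, b, p ∈ ℝ^m, r > 0, c ∈ ℝ. If ⟨p, a_0⟩ − c ≤ −r‖p‖, then the ball {a ∈ ℝ^m : ‖a − a_0‖ ≤ r} is contained in the half-space {a : ⟨p, a⟩ ≤ c}, and the minimum of ⟨b, a⟩ over {a : ‖a − a_0‖ ≤ r and ⟨p, a⟩ ≤ c} equals ⟨b, a_0⟩ − r‖b‖. -/
open scoped RealInnerProductSpace

noncomputable section

/-- **Theorem 4, case iv (inactive half-space)**: if `⟨p, a₀⟩ - c ≤ -r‖p‖`, then the ball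
`{a : ‖a - a₀‖ ≤ r}` is contained in the half-space `{a : ⟨p, a⟩ ≤ c}`, and the minimum of
`⟨b, a⟩` over `{a : ‖a - a₀‖ ≤ r ∧ ⟨p, a⟩ ≤ c}` equals `⟨b, a₀⟩ - r‖b‖`. -/
theorem ball_halfspace_min_inactive (m : ℕ) (hm : 1 ≤ m)
    (a₀ b p : EuclideanSpace ℝ (Fin m)) (r : ℝ) (hr : 0 < r) (c : ℝ)
    (h : ⟪p, a₀⟫ - c ≤ -(r * ‖p‖)) :
    {a : EuclideanSpace ℝ (Fin m) | ‖a - a₀‖ ≤ r} ⊆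
      {a : EuclideanSpace ℝ (Fin m) | ⟪p, a⟫ ≤ c} ∧
    IsLeast ((fun a => ⟪b, a⟫) ''
        {a : EuclideanSpace ℝ (Fin m) | ‖a - a₀‖ ≤ r ∧ ⟪p, a⟫ ≤ c})
      (⟪b, a₀⟫ - r * ‖b‖) := by
  have key : ∀ q a : EuclideanSpace ℝ (Fin m), ‖a - a₀‖ ≤ r →
      |⟪q, a⟫ - ⟪q, a₀⟫| ≤ r * ‖q‖ := by
    intro q a ha
    rw [← inner_sub_right]
    calc |⟪q, a - a₀⟫| ≤ ‖q‖ * ‖a - a₀‖ := abs_real_inner_le_norm _ _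
      _ ≤ ‖q‖ * r := mul_le_mul_of_nonneg_left ha (norm_nonneg _)
      _ = r * ‖q‖ := mul_comm _ _
  have sub : ∀ a : EuclideanSpace ℝ (Fin m), ‖a - a₀‖ ≤ r → ⟪p, a⟫ ≤ c := by
    intro a ha
    have := (abs_le.mp (key p a ha)).2
    linarith
  refine ⟨fun a ha => sub a ha, ?_, ?_⟩
  · have hn : ‖(a₀ - (r / ‖b‖) • b) - a₀‖ ≤ r := by
      rw [sub_sub_cancel_left, norm_neg, norm_smul, Real.norm_of_nonneg (by positivity)]
      by_cases hb : ‖b‖ = 0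
      · simp [hb, hr.le]
      · rw [div_mul_cancel₀ _ hb]
    refine ⟨a₀ - (r / ‖b‖) • b, ⟨hn, sub _ hn⟩, ?_⟩
    change ⟪b, a₀ - (r / ‖b‖) • b⟫ = _
    rw [inner_sub_right, real_inner_smul_right, real_inner_self_eq_norm_sq]
    by_cases hb : ‖b‖ = 0
    · simp [hb]
    · field_simp
  · rintro _ ⟨a, ⟨ha, -⟩, rfl⟩
    have := (abs_le.mp (key b a ha)).1
    change _ ≤ ⟪b, a⟫
    linarith
end
end

section
/- (Theorem 4, case i.1) Ball minimizer feasible: let m ≥ 1, a_0, b, p ∈ ℝ^m with b ≠ 0 and p ≠ 0, r > 0, c ∈ ℝ, and set d = (⟨p, a_0⟩ − c)/(r‖p‖). If d ≤ 1 and ⟨p, b⟩ ≥ d‖p‖‖b‖, then the minimum of ⟨b, a⟩ over the set {a ∈ ℝ^m : ‖a − a_0‖ ≤ r and ⟨p, a⟩ ≤ c} equals ⟨b, a_0⟩ − r‖b‖, attained at a = a_0 − (r/‖b‖)·b. -/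
open scoped RealInnerProductSpace

noncomputable section

/-- **Theorem 4, case i.1 (ball minimizer feasible)**: with `d = (⟨p, a₀⟩ - c)/(r‖p‖)`,
if `d ≤ 1` and `⟨p, b⟩ ≥ d‖p‖‖b‖`, then the minimum of `⟨b, a⟩` over
`{a : ‖a - a₀‖ ≤ r ∧ ⟨p, a⟩ ≤ c}` equals `⟨b, a₀⟩ - r‖b‖`, attained at
`a = a₀ - (r/‖b‖) b`. -/
theorem ball_halfspace_min_ball_feasible (m : ℕ) (hm : 1 ≤ m)
    (a₀ b p : EuclideanSpace ℝ (Fin m)) (hb : b ≠ 0) (hp : p ≠ 0)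
    (r : ℝ) (hr : 0 < r) (c dd : ℝ)
    (hdd : dd = (⟪p, a₀⟫ - c) / (r * ‖p‖))
    (h1 : dd ≤ 1) (h2 : dd * (‖p‖ * ‖b‖) ≤ ⟪p, b⟫) :
    IsLeast ((fun a => ⟪b, a⟫) ''
        {a : EuclideanSpace ℝ (Fin m) | ‖a - a₀‖ ≤ r ∧ ⟪p, a⟫ ≤ c})
      (⟪b, a₀⟫ - r * ‖b‖) ∧
    (a₀ - (r / ‖b‖) • b) ∈
      {a : EuclideanSpace ℝ (Fin m) | ‖a - a₀‖ ≤ r ∧ ⟪p, a⟫ ≤ c} ∧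
    ⟪b, a₀ - (r / ‖b‖) • b⟫ = ⟪b, a₀⟫ - r * ‖b‖ := by
  have hb' : 0 < ‖b‖ := norm_pos_iff.mpr hb
  have hp' : 0 < ‖p‖ := norm_pos_iff.mpr hp
  have hmem : (a₀ - (r / ‖b‖) • b) ∈
      {a : EuclideanSpace ℝ (Fin m) | ‖a - a₀‖ ≤ r ∧ ⟪p, a⟫ ≤ c} := by
    refine ⟨?_, ?_⟩
    · have e : a₀ - (r / ‖b‖) • b - a₀ = -((r / ‖b‖) • b) := by abel
      rw [e, norm_neg, norm_smul, Real.norm_of_nonneg (by positivity)]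
      exact le_of_eq (by field_simp)
    · rw [inner_sub_right, real_inner_smul_right]
      have e : ⟪p, a₀⟫ - c = dd * (r * ‖p‖) := by
        rw [hdd]; field_simp
      have h3 := mul_le_mul_of_nonneg_left h2 (by positivity : 0 ≤ r / ‖b‖)
      have e2 : r / ‖b‖ * (dd * (‖p‖ * ‖b‖)) = dd * (r * ‖p‖) := by field_simp
      linarith
  have hval : ⟪b, a₀ - (r / ‖b‖) • b⟫ = ⟪b, a₀⟫ - r * ‖b‖ := by
    rw [inner_sub_right, real_inner_smul_right, real_inner_self_eq_norm_sq]
    field_simp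
  refine ⟨⟨⟨_, hmem, hval⟩, ?_⟩, hmem, hval⟩
  rintro _ ⟨a, ⟨ha, -⟩, rfl⟩
  have h4 := (abs_le.mp (abs_real_inner_le_norm b (a - a₀))).1
  have h5 := mul_le_mul_of_nonneg_left ha hb'.le
  rw [inner_sub_right] at h4
  show ⟪b, a₀⟫ - r * ‖b‖ ≤ ⟪b, a⟫
  linarith
end
end

section
/- (Theorem 4, antiparallel case) Let m ≥ 1, a_0, b, p ∈ ℝ^m with b ≠ 0 and p ≠ 0, r > 0, c ∈ ℝ, and set d = (⟨p, a_0⟩ − c)/(r‖p‖). Assume ⟨p, b⟩ = −‖p‖‖b‖ (equivalently b = −(‖b‖/‖p‖)·p) and −1 ≤ d ≤ 1. Then the minimum of ⟨b, a⟩ over the set {a ∈ ℝ^m : ‖a − a_0‖ ≤ r and ⟨p, a⟩ ≤ c} equals −(‖b‖/‖p‖)·c. -/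
open scoped RealInnerProductSpace

noncomputable section

/-- **Theorem 4, antiparallel case**: with `d = (⟨p, a₀⟩ - c)/(r‖p‖)`, if
`⟨p, b⟩ = -‖p‖‖b‖` (equivalently `b = -(‖b‖/‖p‖) p`) and `-1 ≤ d ≤ 1`, then the minimum of
`⟨b, a⟩` over `{a : ‖a - a₀‖ ≤ r ∧ ⟨p, a⟩ ≤ c}` equals `-(‖b‖/‖p‖) c`. -/
theorem ball_halfspace_min_antiparallel (m : ℕ) (hm : 1 ≤ m)
    (a₀ b p : EuclideanSpace ℝ (Fin m)) (hb : b ≠ 0) (hp : p ≠ 0)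
    (r : ℝ) (hr : 0 < r) (c dd : ℝ)
    (hdd : dd = (⟪p, a₀⟫ - c) / (r * ‖p‖))
    (hpar : ⟪p, b⟫ = -(‖p‖ * ‖b‖)) (h1 : -1 ≤ dd) (h2 : dd ≤ 1) :
    IsLeast ((fun a => ⟪b, a⟫) ''
        {a : EuclideanSpace ℝ (Fin m) | ‖a - a₀‖ ≤ r ∧ ⟪p, a⟫ ≤ c})
      (-(‖b‖ / ‖p‖) * c) := by
  have hP : 0 < ‖p‖ := norm_pos_iff.mpr hp
  have key : ‖b‖ • p = ‖p‖ • (-b) := by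
    have h := (inner_eq_norm_mul_iff_real (x := p) (y := -b)).1 (by
      rw [inner_neg_right, hpar, norm_neg, neg_neg])
    rwa [norm_neg] at h
  have hin : ∀ a : EuclideanSpace ℝ (Fin m), ⟪b, a⟫ = -(‖b‖ / ‖p‖) * ⟪p, a⟫ := by
    intro a
    have h := congrArg (fun x => ⟪x, a⟫) key
    simp only [real_inner_smul_left, inner_neg_left] at h
    field_simp
    linarith
  have hd : r * dd * ‖p‖ = ⟪p, a₀⟫ - c := by
    rw [hdd]
    field_simp
  constructor
  · have hc : ⟪p, a₀ - (r * dd / ‖p‖) • p⟫ = c := by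
      rw [inner_sub_right, real_inner_smul_right, real_inner_self_eq_norm_sq]
      have : r * dd / ‖p‖ * ‖p‖ ^ 2 = r * dd * ‖p‖ := by
        field_simp
      linarith
    refine ⟨a₀ - (r * dd / ‖p‖) • p, ⟨?_, hc.le⟩, ?_⟩
    · rw [sub_sub_cancel_left, norm_neg, norm_smul, Real.norm_eq_abs, abs_div, abs_norm,
        div_mul_cancel₀ _ hP.ne', abs_mul, abs_of_pos hr]
      have := abs_le.2 ⟨h1, h2⟩
      nlinarith
    · simp only [hin, hc]
  · rintro _ ⟨a, ⟨-, ha⟩, rfl⟩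
    simp only [hin]
    have : 0 ≤ ‖b‖ / ‖p‖ := by positivity
    nlinarith
end
end
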